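/- Let ω ≥ 1 be an integer and η > 0. The double series Ξ₅(s) = (2 sin(πs)/π) · Σ_{k≥1} Σ_{j≥0} ((s)_j/(j!·4^j)) · (kω)^{1-2s-2j} · ∫₁^{∞} u^{-2s-2j} · log(1 + √(1 + u² sinh(η)²)/(u·cosh(η))) du converges absolutely and locally uniformly on the strip {s ∈ ℂ : 1 < Re(s) < 2}, and its sum extends to a meromorphic function on the half-plane {Re(s) > -1/2} which is holomorphic at s = 0 with value Ξ₅(0) = 0; moreover, for fixed ω, its derivative at 0 satisfies Ξ₅'(0) = (ζ(0) + log 2)/(2ω) + (ω/6)·log 2 + (ω/6)·log(η) + o(1) as η → 0⁺. -/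

import Mathlib

open MeasureTheory Filter

/-- The Pochhammer symbol `(s)_j = s(s+1)⋯(s+j-1)`. -/
noncomputable def pochSym (s : ℂ) (j : ℕ) : ℂ := ∏ i ∈ Finset.range j, (s + i)

/-- The `(k,j)`-term of the double series `Ξ₅(s)`:
`(2 sin(πs)/π) · ((s)_j/(j!·4^j)) · (kω)^{1-2s-2j} ·
  ∫₁^∞ u^{-2s-2j} · log(1 + √(1 + u² sinh(η)²)/(u·cosh η)) du`. -/
noncomputable def Xi5Term (ω : ℕ) (η : ℝ) (k j : ℕ) (s : ℂ) : ℂ :=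
  (2 * Complex.sin ((Real.pi : ℂ) * s) / (Real.pi : ℂ)) *
    (pochSym s j / ((Nat.factorial j : ℂ) * 4 ^ j)) *
    (((k : ℝ) * (ω : ℝ) : ℝ) : ℂ) ^ (1 - 2 * s - 2 * (j : ℂ)) *
    ∫ u in Set.Ioi (1 : ℝ),
      (u : ℂ) ^ (-(2 * s) - 2 * (j : ℂ)) *
        ((Real.log (1 + Real.sqrt (1 + u ^ 2 * Real.sinh η ^ 2) / (u * Real.cosh η)) : ℝ) : ℂ)

/-!
The integral over `u` is a Mellin transform `J(w) = ∫₁^∞ u^{-w} f(u) du` at `w = 2s + 2j`, with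
`f(u) = c + O(u⁻²)` and `c = log (1 + tanh η)`. Splitting off the constant,
`J(w) = c/(w - 1) + ∫₁^∞ u^{-w} (f(u) - c) du` continues `J` to `Re w > -1` with a single pole at
`w = 1`. Summing over `k` first turns the double series into
`(2 sin(πs)/π) ∑_j (s)_j/(j! 4^j) ω^{1-2s-2j} ζ(2s+2j-1) J(2s+2j)`. The terms with `j ≥ 2` sum to a
holomorphic function on `Re s > -1/2`, the term `j = 0` is meromorphic there and holomorphic at
`0`, and for `j = 1` the factor `(s)_1 = s` cancels the pole of `ζ(2s+1)` at `0`.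

Since the sine factor vanishes at `0` with derivative `2`, only `j = 0` and `j = 1` contribute to
`Ξ₅'(0) = 2 (ω ζ(-1) J(0) + J(2)/(8ω))`. An explicit antiderivative of `f - c` gives
`J(0) = log cosh η - log 2 - log sinh η = -log 2 - log η + o(1)`, and dominated convergence gives
`J(2) → ∫₁^∞ u⁻² log(1 + 1/u) du = 2 log 2 - 1`.
-/

section TailMellin

open Set Asymptotics Topology

/-- The Mellin transform `∫₁^∞ u^{-w} f(u) du` over the half-line `(1, ∞)`, parametrised so that it
converges for large `Re w`. -/
noncomputable def tailMellin (f : ℝ → ℂ) (w : ℂ) : ℂ := ∫ u in Ioi (1 : ℝ), (u : ℂ) ^ (-w) * f u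

/-- The continuation of `tailMellin f` past its pole at `w = 1`, for an `f` tending to `c` at
infinity: the transform of the constant `c` is replaced by its closed form `c / (w - 1)`. -/
noncomputable def tailMellinCont (f : ℝ → ℂ) (c w : ℂ) : ℂ :=
  c / (w - 1) + tailMellin (fun u => f u - c) w

lemma tailMellin_eq_mellin (f : ℝ → ℂ) (w : ℂ) :
    tailMellin f w = mellin ((Ioi 1).indicator f) (1 - w) := by
  have hind : ∀ u : ℝ, (u : ℂ) ^ (1 - w - 1) • (Ioi (1 : ℝ)).indicator f u =
      (Ioi (1 : ℝ)).indicator (fun u => (u : ℂ) ^ (-w) * f u) u := fun u => by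
    rw [sub_sub_cancel_left, smul_eq_mul, indicator_mul_right]
  have hinter : Ioi (0 : ℝ) ∩ Ioi 1 = Ioi 1 :=
    inter_eq_right.2 (Ioi_subset_Ioi zero_le_one)
  simp only [tailMellin, mellin, hind, setIntegral_indicator measurableSet_Ioi, hinter]

lemma tailMellin_ofReal (f : ℝ → ℝ) (r : ℝ) :
    tailMellin (fun u => (f u : ℂ)) r = ((∫ u in Ioi (1 : ℝ), u ^ (-r) * f u : ℝ) : ℂ) := by
  rw [tailMellin, ← integral_complex_ofReal]
  refine setIntegral_congr_fun measurableSet_Ioi fun u hu => ?_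
  have hu0 : 0 ≤ u := zero_le_one.trans (le_of_lt hu)
  simp only [Complex.ofReal_mul, Complex.ofReal_cpow hu0, Complex.ofReal_neg]

lemma differentiableAt_tailMellin {f : ℝ → ℂ} {a : ℝ} {w : ℂ}
    (hf : LocallyIntegrableOn f (Ioi 0)) (hO : f =O[atTop] fun u => u ^ (-a))
    (hw : 1 - a < w.re) : DifferentiableAt ℂ (tailMellin f) w := by
  have hloc : LocallyIntegrableOn ((Ioi 1).indicator f) (Ioi 0) := fun x hx =>
    let ⟨t, ht, hint⟩ := hf x hx
    ⟨t, ht, hint.indicator measurableSet_Ioi⟩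
  have htop : (Ioi 1).indicator f =O[atTop] fun u : ℝ => u ^ (-a) :=
    hO.congr' ((eventually_gt_atTop 1).mono fun _ hu => (indicator_of_mem hu f).symm) .rfl
  have hbot : (Ioi 1).indicator f =O[𝓝[>] 0] fun u : ℝ => u ^ (-(-w.re)) := by
    have hzero : (Ioi 1).indicator f =ᶠ[𝓝[>] 0] fun _ => 0 :=
      mem_nhdsWithin_of_mem_nhds (mem_of_superset (Iio_mem_nhds one_pos) fun u hu =>
        indicator_of_notMem (notMem_Ioi.2 (le_of_lt hu)) f)
    exact hzero.trans_isBigO (isBigO_zero _ _)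
  have hmellin : DifferentiableAt ℂ (mellin ((Ioi 1).indicator f)) (1 - w) :=
    mellin_differentiableAt_of_isBigO_rpow hloc htop
      (by rw [Complex.sub_re, Complex.one_re]; linarith) hbot (by simp)
  rw [funext (tailMellin_eq_mellin f)]
  exact hmellin.fun_comp' w (by fun_prop)

lemma analyticAt_tailMellin {f : ℝ → ℂ} {a : ℝ} {w : ℂ}
    (hf : LocallyIntegrableOn f (Ioi 0)) (hO : f =O[atTop] fun u => u ^ (-a))
    (hw : 1 - a < w.re) : AnalyticAt ℂ (tailMellin f) w :=
  DifferentiableOn.analyticAt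
    (fun _ hz => (differentiableAt_tailMellin hf hO hz).differentiableWithinAt)
    ((Complex.isOpen_re_gt _).mem_nhds hw)

lemma meromorphicAt_tailMellinCont {f : ℝ → ℂ} {c : ℂ} {a : ℝ} {w : ℂ}
    (hf : LocallyIntegrableOn (fun u => f u - c) (Ioi 0))
    (hO : (fun u => f u - c) =O[atTop] fun u => u ^ (-a)) (hw : 1 - a < w.re) :
    MeromorphicAt (tailMellinCont f c) w :=
  .fun_add (.fun_div (.const c w) (.fun_sub (.id w) (.const 1 w)))
    (analyticAt_tailMellin hf hO hw).meromorphicAt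

lemma analyticAt_tailMellinCont {f : ℝ → ℂ} {c : ℂ} {a : ℝ} {w : ℂ}
    (hf : LocallyIntegrableOn (fun u => f u - c) (Ioi 0))
    (hO : (fun u => f u - c) =O[atTop] fun u => u ^ (-a)) (hw : 1 - a < w.re) (hw1 : w ≠ 1) :
    AnalyticAt ℂ (tailMellinCont f c) w :=
  .fun_add (.fun_div analyticAt_const (.fun_sub analyticAt_id analyticAt_const)
    (sub_ne_zero.2 hw1)) (analyticAt_tailMellin hf hO hw)

lemma integrableOn_Ioi_one_cpow {w : ℂ} (hw : 1 < w.re) :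
    IntegrableOn (fun u : ℝ => (u : ℂ) ^ (-w)) (Ioi 1) :=
  integrableOn_Ioi_cpow_of_lt (by simpa using hw) one_pos

lemma tailMellin_const (c : ℂ) {w : ℂ} (hw : 1 < w.re) :
    tailMellin (fun _ => c) w = c / (w - 1) := by
  have hw' : (-w).re < -1 := by simpa using hw
  rw [tailMellin, integral_mul_const, integral_Ioi_cpow_of_lt hw' one_pos, Complex.ofReal_one,
    Complex.one_cpow, neg_add_eq_sub, neg_div, ← div_neg, neg_sub, one_div_mul_eq_div]

lemma tailMellinCont_eq_tailMellin {f : ℝ → ℂ} (c : ℂ) {C : ℝ} {w : ℂ}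
    (hf : AEStronglyMeasurable f (volume.restrict (Ioi 1))) (hC : ∀ u ∈ Ioi (1 : ℝ), ‖f u‖ ≤ C)
    (hw : 1 < w.re) : tailMellinCont f c w = tailMellin f w := by
  have hint : IntegrableOn (fun u : ℝ => (u : ℂ) ^ (-w) * f u) (Ioi 1) :=
    (integrableOn_Ioi_one_cpow hw).mul_bdd hf (ae_restrict_of_forall_mem measurableSet_Ioi hC)
  have hsub : tailMellin (fun u => f u - c) w = tailMellin f w - tailMellin (fun _ => c) w := by
    simp only [tailMellin, mul_sub]
    exact integral_sub hint ((integrableOn_Ioi_one_cpow hw).mul_const c)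
  rw [tailMellinCont, hsub, tailMellin_const c hw, add_sub_cancel]

lemma norm_cpow_neg_mul_le {f : ℝ → ℂ} {C : ℝ} (hC : ∀ u ∈ Ioi (1 : ℝ), ‖f u‖ ≤ C) (w : ℂ) {u : ℝ}
    (hu : u ∈ Ioi 1) : ‖(u : ℂ) ^ (-w) * f u‖ ≤ u ^ (-w.re) * C := by
  have hu0 : 0 < u := one_pos.trans hu
  rw [norm_mul, Complex.norm_cpow_eq_rpow_re_of_pos hu0, Complex.neg_re]
  exact mul_le_mul_of_nonneg_left (hC u hu) (by positivity)

lemma integrableOn_Ioi_one_rpow_mul {r : ℝ} (hr : 1 < r) (C : ℝ) :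
    IntegrableOn (fun u : ℝ => u ^ (-r) * C) (Ioi 1) :=
  (integrableOn_Ioi_rpow_of_lt (neg_lt_neg hr) one_pos).mul_const C

lemma norm_tailMellin_le {f : ℝ → ℂ} {C : ℝ} {w : ℂ} (hC : ∀ u ∈ Ioi (1 : ℝ), ‖f u‖ ≤ C)
    (hw : 1 < w.re) : ‖tailMellin f w‖ ≤ C / (w.re - 1) := by
  have hint : ∫ u in Ioi (1 : ℝ), u ^ (-w.re) * C = C / (w.re - 1) := by
    rw [integral_mul_const, integral_Ioi_rpow_of_lt (neg_lt_neg hw) one_pos, Real.one_rpow,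
      neg_add_eq_sub, neg_div, ← div_neg, neg_sub, one_div_mul_eq_div]
  rw [← hint]
  exact norm_integral_le_of_norm_le (integrableOn_Ioi_one_rpow_mul hw C)
    (ae_restrict_of_forall_mem measurableSet_Ioi fun u hu => norm_cpow_neg_mul_le hC w hu)

lemma tendsto_tailMellin_of_bounded {ι : Type*} {l : Filter ι} [l.IsCountablyGenerated]
    {f : ι → ℝ → ℂ} {g : ℝ → ℂ} {C : ℝ} {w : ℂ}
    (hf : ∀ i, AEStronglyMeasurable (f i) (volume.restrict (Ioi 1)))
    (hC : ∀ i, ∀ u ∈ Ioi (1 : ℝ), ‖f i u‖ ≤ C)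
    (hlim : ∀ u ∈ Ioi (1 : ℝ), Tendsto (fun i => f i u) l (𝓝 (g u))) (hw : 1 < w.re) :
    Tendsto (fun i => tailMellin (f i) w) l (𝓝 (tailMellin g w)) := by
  refine tendsto_integral_filter_of_dominated_convergence (fun u => u ^ (-w.re) * C)
    (.of_forall fun i => (integrableOn_Ioi_one_cpow hw).aestronglyMeasurable.mul (hf i))
    (.of_forall fun i => ae_restrict_of_forall_mem measurableSet_Ioi fun u hu =>
      norm_cpow_neg_mul_le (hC i) w hu)
    (integrableOn_Ioi_one_rpow_mul hw C)
    (ae_restrict_of_forall_mem measurableSet_Ioi fun u hu => (hlim u hu).const_mul _)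

end TailMellin

section LogKernel

open Set Asymptotics Topology

/-- The square root `√(1 + u² sinh² η)` in the integrand of `Xi5Term`. -/
noncomputable def hypRoot (η u : ℝ) : ℝ := Real.sqrt (1 + u ^ 2 * Real.sinh η ^ 2)

/-- The logarithm in the integrand of `Xi5Term`. -/
noncomputable def logKernel (η u : ℝ) : ℝ := Real.log (1 + hypRoot η u / (u * Real.cosh η))

/-- The limit `log (1 + tanh η)` of `logKernel η u` as `u → ∞`. -/
noncomputable def logKernelLimit (η : ℝ) : ℝ := η - Real.log (Real.cosh η)

lemma hypRoot_pos (η u : ℝ) : 0 < hypRoot η u := Real.sqrt_pos.2 (by positivity)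

lemma hypRoot_sq (η u : ℝ) : hypRoot η u ^ 2 = 1 + u ^ 2 * Real.sinh η ^ 2 :=
  Real.sq_sqrt (by positivity)

lemma hypRoot_one (η : ℝ) : hypRoot η 1 = Real.cosh η := by
  rw [hypRoot, one_pow, one_mul, add_comm, ← Real.cosh_sq, Real.sqrt_sq (Real.cosh_pos η).le]

lemma mul_sinh_le_hypRoot (η u : ℝ) : u * Real.sinh η ≤ hypRoot η u :=
  Real.le_sqrt_of_sq_le (by rw [mul_pow]; linarith)

lemma hypRoot_le_mul_cosh {η u : ℝ} (hu : 1 ≤ u) : hypRoot η u ≤ u * Real.cosh η := by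
  refine Real.sqrt_le_iff.2 ⟨by positivity, ?_⟩
  rw [mul_pow, Real.cosh_sq]
  nlinarith

lemma hypRoot_eq_mul_sqrt (η : ℝ) {u : ℝ} (hu : 0 < u) :
    hypRoot η u = u * Real.sqrt (u⁻¹ ^ 2 + Real.sinh η ^ 2) := by
  have hfactor : 1 + u ^ 2 * Real.sinh η ^ 2 = u ^ 2 * (u⁻¹ ^ 2 + Real.sinh η ^ 2) := by
    field_simp
  rw [hypRoot, hfactor, Real.sqrt_mul (by positivity), Real.sqrt_sq hu.le]

lemma hasDerivAt_hypRoot (η u : ℝ) :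
    HasDerivAt (hypRoot η) (u * Real.sinh η ^ 2 / hypRoot η u) u := by
  have hradicand : HasDerivAt (fun u : ℝ => 1 + u ^ 2 * Real.sinh η ^ 2)
      (2 * u * Real.sinh η ^ 2) u := by
    simpa using ((hasDerivAt_pow 2 u).mul_const (Real.sinh η ^ 2)).const_add 1
  convert! hradicand.sqrt (by positivity) using 1
  rw [← hypRoot, mul_assoc, mul_div_mul_left _ _ two_ne_zero]

lemma logKernelLimit_eq_log (η : ℝ) :
    logKernelLimit η = Real.log (1 + Real.sinh η / Real.cosh η) := by
  have hcosh := (Real.cosh_pos η).ne'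
  rw [one_add_div hcosh, Real.cosh_add_sinh, Real.log_div (Real.exp_ne_zero η) hcosh,
    Real.log_exp, logKernelLimit]

lemma logKernel_nonneg {η u : ℝ} (hu : 0 < u) : 0 ≤ logKernel η u := by
  have hroot := hypRoot_pos η u
  exact Real.log_nonneg (le_add_of_nonneg_right (by positivity))

lemma logKernel_le_log_two {η u : ℝ} (hu : 1 ≤ u) : logKernel η u ≤ Real.log 2 := by
  have hroot := hypRoot_pos η u
  have hratio : hypRoot η u / (u * Real.cosh η) ≤ 1 :=
    div_le_one_of_le₀ (hypRoot_le_mul_cosh hu) (by positivity)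
  exact Real.log_le_log (by positivity) (by linarith)

lemma norm_logKernel_le (η : ℝ) {u : ℝ} (hu : u ∈ Ioi 1) : ‖(logKernel η u : ℂ)‖ ≤ Real.log 2 := by
  rw [Complex.norm_of_nonneg (logKernel_nonneg (one_pos.trans hu))]
  exact logKernel_le_log_two (le_of_lt hu)

lemma logKernelLimit_le_logKernel (η : ℝ) {u : ℝ} (hu : 0 < u) :
    logKernelLimit η ≤ logKernel η u := by
  have hcosh := Real.cosh_pos η
  have hpos : 0 < 1 + Real.sinh η / Real.cosh η := by
    rw [one_add_div hcosh.ne', Real.cosh_add_sinh]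
    positivity
  rw [logKernelLimit_eq_log, logKernel]
  refine Real.log_le_log hpos (add_le_add_right ?_ 1)
  rw [← mul_div_mul_left _ _ hu.ne']
  exact div_le_div_of_nonneg_right (mul_sinh_le_hypRoot η u) (by positivity)

lemma log_sub_log_le_sub {x y : ℝ} (hx : 1 ≤ x) (hxy : x ≤ y) :
    Real.log y - Real.log x ≤ y - x := by
  have hx0 : 0 < x := one_pos.trans_le hx
  have hy0 : 0 < y := hx0.trans_le hxy
  calc Real.log y - Real.log x = Real.log (y / x) := (Real.log_div hy0.ne' hx0.ne').symm
    _ ≤ y / x - 1 := Real.log_le_sub_one_of_pos (by positivity)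
    _ = (y - x) / x := by rw [sub_div, div_self hx0.ne']
    _ ≤ y - x := div_le_self (sub_nonneg.2 hxy) hx

lemma logKernel_sub_limit_le {η u : ℝ} (hη : 0 < η) (hu : 0 < u) :
    logKernel η u - logKernelLimit η ≤ (Real.sinh η)⁻¹ * u ^ (-2 : ℝ) := by
  have hcosh := Real.one_le_cosh η
  have hroot := hypRoot_pos η u
  have hle := mul_sinh_le_hypRoot η u
  have hargs : 1 + Real.sinh η / Real.cosh η ≤ 1 + hypRoot η u / (u * Real.cosh η) := by
    rw [← mul_div_mul_left (Real.sinh η) _ hu.ne']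
    gcongr
  have hrationalize : hypRoot η u / (u * Real.cosh η) - Real.sinh η / Real.cosh η =
      1 / ((hypRoot η u + u * Real.sinh η) * (u * Real.cosh η)) := by
    field_simp
    linear_combination hypRoot_sq η u
  calc logKernel η u - logKernelLimit η
      ≤ 1 + hypRoot η u / (u * Real.cosh η) - (1 + Real.sinh η / Real.cosh η) := by
        rw [logKernelLimit_eq_log, logKernel]
        exact log_sub_log_le_sub (le_add_of_nonneg_right (by positivity)) hargs
    _ = 1 / ((hypRoot η u + u * Real.sinh η) * (u * Real.cosh η)) := by
        rw [add_sub_add_left_eq_sub, hrationalize]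
    _ ≤ 1 / (u * Real.sinh η * (u * 1)) := by
        gcongr
        exact le_add_of_nonneg_left hroot.le
    _ = (Real.sinh η)⁻¹ * u ^ (-2 : ℝ) := by
        rw [Real.rpow_neg hu.le, Real.rpow_two]
        field_simp

lemma hasDerivAt_logKernel (η : ℝ) {u : ℝ} (hu : 0 < u) :
    HasDerivAt (logKernel η)
      (-1 / (u * hypRoot η u * (u * Real.cosh η + hypRoot η u))) u := by
  have hcosh := Real.cosh_pos η
  have hroot := hypRoot_pos η u
  have hratio := (hasDerivAt_hypRoot η u).fun_div ((hasDerivAt_id u).mul_const (Real.cosh η))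
    (by simpa only [id] using (mul_pos hu hcosh).ne')
  convert! (hratio.const_add 1).log (by simp only [id]; positivity) using 1
  simp only [id]
  field_simp
  linear_combination hypRoot_sq η u

lemma continuousOn_logKernel (η : ℝ) : ContinuousOn (logKernel η) (Ioi 0) :=
  fun _ hu => (hasDerivAt_logKernel η hu).continuousAt.continuousWithinAt

/-- The antiderivative of `logKernel η - logKernelLimit η` on `(0, ∞)` that integration by parts
produces. -/
noncomputable def logKernelPrimitive (η u : ℝ) : ℝ :=
  u * (logKernel η u - logKernelLimit η) + Real.log ((u + 1) / (hypRoot η u + Real.cosh η))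

lemma hasDerivAt_logKernelPrimitive (η : ℝ) {u : ℝ} (hu : 0 < u) :
    HasDerivAt (logKernelPrimitive η) (logKernel η u - logKernelLimit η) u := by
  have hroot := hypRoot_pos η u
  have hprod := (hasDerivAt_id u).fun_mul ((hasDerivAt_logKernel η hu).sub_const (logKernelLimit η))
  have hlog := (((hasDerivAt_id u).add_const 1).fun_div
    ((hasDerivAt_hypRoot η u).add_const (Real.cosh η)) (by positivity)).log
      (by simp only [id]; positivity)
  have hcancel : u * (-1 / (u * hypRoot η u * (u * Real.cosh η + hypRoot η u))) +
      (1 * (hypRoot η u + Real.cosh η) - (u + 1) * (u * Real.sinh η ^ 2 / hypRoot η u)) /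
        (hypRoot η u + Real.cosh η) ^ 2 / ((u + 1) / (hypRoot η u + Real.cosh η)) = 0 := by
    field_simp
    linear_combination hypRoot η u * u * Real.cosh_sq η +
      (hypRoot η u + Real.cosh η + Real.cosh η * u) * hypRoot_sq η u
  convert! hprod.fun_add hlog using 1
  simp only [id]
  linear_combination -hcancel

lemma tendsto_mul_logKernel_sub_limit {η : ℝ} (hη : 0 < η) :
    Tendsto (fun u => u * (logKernel η u - logKernelLimit η)) atTop (𝓝 0) := by
  have hbound : Tendsto (fun u : ℝ => (Real.sinh η)⁻¹ * u⁻¹) atTop (𝓝 0) := by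
    simpa using tendsto_inv_atTop_zero.const_mul (Real.sinh η)⁻¹
  refine squeeze_zero' ?_ ?_ hbound
  · filter_upwards [eventually_gt_atTop 0] with u hu
    exact mul_nonneg hu.le (sub_nonneg.2 (logKernelLimit_le_logKernel η hu))
  · filter_upwards [eventually_gt_atTop 0] with u hu
    calc u * (logKernel η u - logKernelLimit η)
        ≤ u * ((Real.sinh η)⁻¹ * u ^ (-2 : ℝ)) :=
          mul_le_mul_of_nonneg_left (logKernel_sub_limit_le hη hu) hu.le
      _ = (Real.sinh η)⁻¹ * u⁻¹ := by
          rw [Real.rpow_neg hu.le, Real.rpow_two]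
          field_simp

lemma tendsto_add_one_div_hypRoot_add_cosh {η : ℝ} (hη : 0 < η) :
    Tendsto (fun u => (u + 1) / (hypRoot η u + Real.cosh η)) atTop (𝓝 (Real.sinh η)⁻¹) := by
  have hsinh : 0 < Real.sinh η := Real.sinh_pos_iff.2 hη
  have hinv : Tendsto (fun u : ℝ => u⁻¹) atTop (𝓝 0) := tendsto_inv_atTop_zero
  have hdenom : Tendsto (fun u : ℝ => Real.sqrt (u⁻¹ ^ 2 + Real.sinh η ^ 2) + Real.cosh η * u⁻¹)
      atTop (𝓝 (Real.sinh η)) := by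
    have hsum := (((hinv.pow 2).add_const (Real.sinh η ^ 2)).sqrt).add
      (hinv.const_mul (Real.cosh η))
    rwa [zero_pow two_ne_zero, zero_add, Real.sqrt_sq hsinh.le, mul_zero, add_zero] at hsum
  have hquot := (hinv.const_add 1).div hdenom hsinh.ne'
  rw [add_zero, one_div] at hquot
  refine hquot.congr' ?_
  filter_upwards [eventually_gt_atTop 0] with u hu
  rw [hypRoot_eq_mul_sqrt η hu]
  simp only [Pi.div_apply]
  field_simp

lemma tendsto_logKernelPrimitive {η : ℝ} (hη : 0 < η) :
    Tendsto (logKernelPrimitive η) atTop (𝓝 (-Real.log (Real.sinh η))) := by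
  have hlog := (tendsto_add_one_div_hypRoot_add_cosh hη).log
    (inv_ne_zero (Real.sinh_pos_iff.2 hη).ne')
  rw [Real.log_inv] at hlog
  simpa only [zero_add] using! (tendsto_mul_logKernel_sub_limit hη).add hlog

lemma logKernelPrimitive_one (η : ℝ) : logKernelPrimitive η 1 = Real.log 2 - η := by
  have hcosh := (Real.cosh_pos η).ne'
  have hquot : (1 + 1) / (Real.cosh η + Real.cosh η) = (Real.cosh η)⁻¹ := by field_simp
  rw [logKernelPrimitive, logKernel, logKernelLimit, hypRoot_one, one_mul, one_mul,
    div_self hcosh, hquot, Real.log_inv, one_add_one_eq_two]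
  ring

lemma integral_logKernel_sub_limit {η : ℝ} (hη : 0 < η) :
    ∫ u in Ioi (1 : ℝ), (logKernel η u - logKernelLimit η) =
      η - Real.log 2 - Real.log (Real.sinh η) := by
  rw [integral_Ioi_of_hasDerivAt_of_nonneg'
    (fun u hu => hasDerivAt_logKernelPrimitive η (one_pos.trans_le hu))
    (fun u hu => sub_nonneg.2 (logKernelLimit_le_logKernel η (one_pos.trans hu)))
    (tendsto_logKernelPrimitive hη), logKernelPrimitive_one]
  ring

/-- The continuation in `w` of the integral `∫₁^∞ u^{-w} log(1 + √(1 + u² sinh² η)/(u cosh η)) du`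
of `Xi5Term`. -/
noncomputable def logMoment (η : ℝ) : ℂ → ℂ :=
  tailMellinCont (fun u => logKernel η u) (logKernelLimit η)

lemma aestronglyMeasurable_logKernel (η : ℝ) :
    AEStronglyMeasurable (fun u => (logKernel η u : ℂ)) (volume.restrict (Ioi 1)) :=
  (Complex.continuous_ofReal.comp_continuousOn
    ((continuousOn_logKernel η).mono (Ioi_subset_Ioi zero_le_one))).aestronglyMeasurable
      measurableSet_Ioi

lemma locallyIntegrableOn_logKernel_sub_limit (η : ℝ) :
    LocallyIntegrableOn (fun u => (logKernel η u : ℂ) - logKernelLimit η) (Ioi 0) :=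
  ContinuousOn.locallyIntegrableOn
    ((Complex.continuous_ofReal.comp_continuousOn (continuousOn_logKernel η)).sub
      continuousOn_const) measurableSet_Ioi

lemma isBigO_logKernel_sub_limit {η : ℝ} (hη : 0 < η) :
    (fun u => (logKernel η u : ℂ) - logKernelLimit η) =O[atTop] fun u : ℝ => u ^ (-2 : ℝ) := by
  refine .of_bound (Real.sinh η)⁻¹ ?_
  filter_upwards [eventually_gt_atTop 0] with u hu
  rw [← Complex.ofReal_sub,
    Complex.norm_of_nonneg (sub_nonneg.2 (logKernelLimit_le_logKernel η hu)),
    Real.norm_of_nonneg (by positivity)]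
  exact logKernel_sub_limit_le hη hu

lemma logMoment_eq_tailMellin (η : ℝ) {w : ℂ} (hw : 1 < w.re) :
    logMoment η w = tailMellin (fun u => logKernel η u) w :=
  tailMellinCont_eq_tailMellin _ (aestronglyMeasurable_logKernel η)
    (fun _ hu => norm_logKernel_le η hu) hw

lemma norm_logMoment_le (η : ℝ) {w : ℂ} (hw : 2 ≤ w.re) : ‖logMoment η w‖ ≤ Real.log 2 := by
  rw [logMoment_eq_tailMellin η (by linarith)]
  exact (norm_tailMellin_le (fun _ hu => norm_logKernel_le η hu) (by linarith)).trans
    (div_le_self (Real.log_nonneg one_le_two) (by linarith))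

lemma meromorphicAt_logMoment {η : ℝ} (hη : 0 < η) {w : ℂ} (hw : -1 < w.re) :
    MeromorphicAt (logMoment η) w :=
  meromorphicAt_tailMellinCont (locallyIntegrableOn_logKernel_sub_limit η)
    (isBigO_logKernel_sub_limit hη) (by linarith)

lemma analyticAt_logMoment {η : ℝ} (hη : 0 < η) {w : ℂ} (hw : -1 < w.re) (hw1 : w ≠ 1) :
    AnalyticAt ℂ (logMoment η) w :=
  analyticAt_tailMellinCont (locallyIntegrableOn_logKernel_sub_limit η)
    (isBigO_logKernel_sub_limit hη) (by linarith) hw1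

lemma analyticAt_logMoment_zero {η : ℝ} (hη : 0 < η) : AnalyticAt ℂ (logMoment η) 0 :=
  analyticAt_logMoment hη (by norm_num) zero_ne_one

lemma analyticAt_logMoment_of_one_lt_re {η : ℝ} (hη : 0 < η) {w : ℂ} (hw : 1 < w.re) :
    AnalyticAt ℂ (logMoment η) w :=
  analyticAt_logMoment hη (by linarith) (by rintro rfl; exact lt_irrefl _ hw)

lemma logMoment_zero {η : ℝ} (hη : 0 < η) :
    logMoment η 0 =
      ((Real.log (Real.cosh η) - Real.log 2 - Real.log (Real.sinh η) : ℝ) : ℂ) := by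
  have hint := tailMellin_ofReal (fun u => logKernel η u - logKernelLimit η) 0
  simp only [neg_zero, Real.rpow_zero, one_mul, integral_logKernel_sub_limit hη,
    Complex.ofReal_zero, Complex.ofReal_sub] at hint
  rw [logMoment, tailMellinCont, hint, logKernelLimit]
  push_cast
  ring

lemma tendsto_log_sinh_sub_log :
    Tendsto (fun η : ℝ => Real.log (Real.sinh η) - Real.log η) (𝓝[>] 0) (𝓝 0) := by
  have hquot : Tendsto (fun η : ℝ => Real.sinh η / η) (𝓝[>] 0) (𝓝 1) := by
    simpa [div_eq_inv_mul] using (Real.hasDerivAt_sinh 0).tendsto_slope_zero_right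
  have hlog := hquot.log one_ne_zero
  rw [Real.log_one] at hlog
  refine hlog.congr' ?_
  filter_upwards [self_mem_nhdsWithin] with η hη
  exact Real.log_div (Real.sinh_pos_iff.2 hη).ne' (ne_of_gt hη)

lemma tendsto_logMoment_zero_add_log :
    Tendsto (fun η : ℝ => logMoment η 0 + Real.log 2 + Real.log η) (𝓝[>] 0) (𝓝 0) := by
  have hcosh : Tendsto (fun η => Real.log (Real.cosh η)) (𝓝[>] 0) (𝓝 0) := by
    have hcont : ContinuousAt (fun η => Real.log (Real.cosh η)) 0 :=
      Real.continuous_cosh.continuousAt.log (Real.cosh_pos 0).ne'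
    simpa using hcont.tendsto.mono_left nhdsWithin_le_nhds
  have hdiff := (Complex.continuous_ofReal.tendsto _).comp (hcosh.sub tendsto_log_sinh_sub_log)
  rw [sub_zero, Complex.ofReal_zero] at hdiff
  refine hdiff.congr' ?_
  filter_upwards [self_mem_nhdsWithin] with η hη
  rw [logMoment_zero hη, Function.comp_apply]
  push_cast
  ring

lemma integral_rpow_neg_two_mul_log :
    ∫ u in Ioi (1 : ℝ), u ^ (-2 : ℝ) * Real.log (1 + 1 / u) = 2 * Real.log 2 - 1 := by
  have hderiv : ∀ u ∈ Ici (1 : ℝ), HasDerivAt (fun u : ℝ => u⁻¹ - (1 + u⁻¹) * Real.log (1 + u⁻¹))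
      (u ^ (-2 : ℝ) * Real.log (1 + 1 / u)) u := fun u hu => by
    have hu0 : 0 < u := one_pos.trans_le hu
    have hinv := hasDerivAt_inv hu0.ne'
    have hadd := hinv.const_add 1
    convert! hinv.fun_sub (hadd.fun_mul (hadd.log (by positivity))) using 1
    rw [Real.rpow_neg hu0.le, Real.rpow_two, one_div]
    field_simp
    ring
  have hnonneg : ∀ u ∈ Ioi (1 : ℝ), 0 ≤ u ^ (-2 : ℝ) * Real.log (1 + 1 / u) := fun u hu => by
    have hu0 : 0 < u := one_pos.trans hu
    exact mul_nonneg (by positivity) (Real.log_nonneg (le_add_of_nonneg_right (by positivity)))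
  have hlim : Tendsto (fun u : ℝ => u⁻¹ - (1 + u⁻¹) * Real.log (1 + u⁻¹)) atTop (𝓝 0) := by
    have hinv : Tendsto (fun u : ℝ => u⁻¹) atTop (𝓝 0) := tendsto_inv_atTop_zero
    simpa using
      hinv.sub ((hinv.const_add 1).mul ((hinv.const_add 1).log (by norm_num)))
  rw [integral_Ioi_of_hasDerivAt_of_nonneg' hderiv hnonneg hlim]
  norm_num

lemma tendsto_logKernel_nhds_zero {u : ℝ} (hu : 0 < u) :
    Tendsto (fun η => logKernel η u) (𝓝 0) (𝓝 (Real.log (1 + 1 / u))) := by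
  have hcont : ContinuousAt (fun η => logKernel η u) 0 := by
    have hroot := hypRoot_pos 0 u
    have hdenom : 0 < u * Real.cosh 0 := mul_pos hu (Real.cosh_pos 0)
    have harg : 0 < 1 + hypRoot 0 u / (u * Real.cosh 0) := by positivity
    have hrootCont : Continuous fun η => hypRoot η u := by unfold hypRoot; fun_prop
    exact (continuousAt_const.add (hrootCont.continuousAt.div
      (continuousAt_const.mul Real.continuous_cosh.continuousAt) hdenom.ne')).log harg.ne'
  simpa [logKernel, hypRoot] using hcont.tendsto

lemma tendsto_logMoment_two :
    Tendsto (fun η => logMoment η 2) (𝓝[>] 0) (𝓝 ((2 * Real.log 2 - 1 : ℝ) : ℂ)) := by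
  have hw : 1 < (2 : ℂ).re := by norm_num
  have hvalue := tailMellin_ofReal (fun u => Real.log (1 + 1 / u)) 2
  rw [integral_rpow_neg_two_mul_log, Complex.ofReal_ofNat] at hvalue
  simp only [logMoment_eq_tailMellin _ hw, ← hvalue]
  refine tendsto_tailMellin_of_bounded aestronglyMeasurable_logKernel
    (fun η u hu => norm_logKernel_le η hu) (fun u hu => ?_) hw
  exact (Complex.continuous_ofReal.tendsto _).comp
    ((tendsto_logKernel_nhds_zero (one_pos.trans hu)).mono_left nhdsWithin_le_nhds)

end LogKernel

section Coefficients

/-- The prefactor `2 sin(πs)/π` of the double series. -/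
noncomputable def sineFactor (s : ℂ) : ℂ := 2 * Complex.sin (Real.pi * s) / Real.pi

/-- The coefficient `(s)_j / (j! 4^j)` of the double series. -/
noncomputable def pochCoeff (s : ℂ) (j : ℕ) : ℂ := pochSym s j / ((Nat.factorial j : ℂ) * 4 ^ j)

/-- A summable majorant of `pochCoeff s`, uniform in `‖s‖ ≤ M`: up to the factor `4^{-j}` it is
`(M + 1)_j / j!`. -/
noncomputable def pochMajorant (M j : ℕ) : ℝ := ((j + M).choose M : ℝ) * (1 / 4) ^ j

lemma differentiable_sineFactor : Differentiable ℂ sineFactor := by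
  unfold sineFactor
  fun_prop

lemma sineFactor_zero : sineFactor 0 = 0 := by simp [sineFactor]

lemma hasDerivAt_sineFactor_zero : HasDerivAt sineFactor 2 0 := by
  have hlin : HasDerivAt (fun s : ℂ => (Real.pi : ℂ) * s) Real.pi 0 := by
    simpa using (hasDerivAt_id (0 : ℂ)).const_mul (Real.pi : ℂ)
  convert! (hlin.csin.const_mul 2).div_const (Real.pi : ℂ) using 1
  have hpi : (Real.pi : ℂ) ≠ 0 := Complex.ofReal_ne_zero.2 Real.pi_ne_zero
  simp [hpi]

lemma analyticAt_pochCoeff (j : ℕ) (s : ℂ) : AnalyticAt ℂ (fun z => pochCoeff z j) s := by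
  have hdiff : Differentiable ℂ fun z => pochCoeff z j := by
    unfold pochCoeff pochSym
    fun_prop
  exact hdiff.analyticAt s

lemma pochCoeff_zero_right (s : ℂ) : pochCoeff s 0 = 1 := by simp [pochCoeff, pochSym]

lemma pochCoeff_one_right (s : ℂ) : pochCoeff s 1 = s / 4 := by simp [pochCoeff, pochSym]

lemma pochCoeff_zero_succ (j : ℕ) : pochCoeff 0 (j + 1) = 0 := by
  simp [pochCoeff, pochSym, Finset.prod_range_succ']

lemma norm_pochSym_le {M : ℕ} {s : ℂ} (hs : ‖s‖ ≤ M) (j : ℕ) :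
    ‖pochSym s j‖ ≤ (Nat.factorial j : ℝ) * ((j + M).choose M : ℝ) := by
  have hrising : (Nat.factorial j : ℝ) * ((j + M).choose M : ℝ) =
      ∏ i ∈ Finset.range j, ((M + 1 : ℝ) + i) := by
    have hasc := Nat.ascFactorial_eq_factorial_mul_choose M j
    rw [Nat.ascFactorial_eq_prod_range, ← Nat.choose_symm_add, add_comm M j] at hasc
    exact_mod_cast hasc.symm
  rw [hrising, pochSym, norm_prod]
  refine Finset.prod_le_prod (fun _ _ => norm_nonneg _) fun i _ => ?_
  calc ‖s + i‖ ≤ ‖s‖ + ‖(i : ℂ)‖ := norm_add_le _ _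
    _ = ‖s‖ + i := by rw [Complex.norm_natCast]
    _ ≤ (M + 1 : ℝ) + i := by linarith

lemma norm_pochCoeff_le {M : ℕ} {s : ℂ} (hs : ‖s‖ ≤ M) (j : ℕ) :
    ‖pochCoeff s j‖ ≤ pochMajorant M j := by
  have hden : ‖(Nat.factorial j : ℂ) * 4 ^ j‖ = (Nat.factorial j : ℝ) * 4 ^ j := by simp
  rw [pochCoeff, pochMajorant, norm_div, hden, div_le_iff₀ (by positivity)]
  refine (norm_pochSym_le hs j).trans_eq ?_
  rw [one_div, inv_pow]
  field_simp

lemma pochMajorant_nonneg (M j : ℕ) : 0 ≤ pochMajorant M j := by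
  unfold pochMajorant
  positivity

lemma summable_pochMajorant (M : ℕ) : Summable (pochMajorant M) :=
  summable_choose_mul_geometric_of_norm_lt_one M (by norm_num)

end Coefficients

section RiemannZeta

lemma meromorphicAt_riemannZeta (z : ℂ) : MeromorphicAt riemannZeta z := by
  have hquot : MeromorphicAt (fun s => (s - 1)⁻¹ * riemannZeta₁ s) z :=
    .fun_mul (.fun_inv (.fun_sub (.id z) (.const 1 z)))
      (differentiable_riemannZeta₁.analyticAt z).meromorphicAt
  refine hquot.congr ?_
  have hne : ∀ᶠ s in nhdsWithin z {z}ᶜ, s ≠ 1 := by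
    rcases eq_or_ne z 1 with rfl | hz
    · exact self_mem_nhdsWithin
    · exact (eventually_ne_nhds hz).filter_mono nhdsWithin_le_nhds
  filter_upwards [hne] with s hs using (riemannZeta_eq_inv_sub_mul hs).symm

lemma summable_one_div_nat_succ_rpow {σ : ℝ} (hσ : 1 < σ) :
    Summable fun n : ℕ => 1 / ((n + 1 : ℕ) : ℝ) ^ σ :=
  (summable_nat_add_iff 1).2 (Real.summable_one_div_nat_rpow.2 hσ)

lemma norm_riemannZeta_le {σ : ℝ} {z : ℂ} (hσ : 1 < σ) (hz : σ ≤ z.re) :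
    ‖riemannZeta z‖ ≤ ∑' n : ℕ, 1 / ((n + 1 : ℕ) : ℝ) ^ σ := by
  rw [zeta_eq_tsum_one_div_nat_add_one_cpow (hσ.trans_le hz)]
  refine tsum_of_norm_bounded (summable_one_div_nat_succ_rpow hσ).hasSum fun n => ?_
  rw [← Nat.cast_succ, norm_div, norm_one, Complex.norm_natCast_cpow_of_pos n.succ_pos]
  gcongr
  exact_mod_cast n.succ_pos

lemma riemannZeta_neg_one : riemannZeta (-1) = -1 / 12 := by
  have hbernoulli := riemannZeta_neg_nat_eq_bernoulli' 1
  rw [Nat.cast_one, one_add_one_eq_two, bernoulli'_two] at hbernoulli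
  rw [hbernoulli]
  norm_num

end RiemannZeta

section ConeSeries

/-- The `(k, j)`-term of the double series with the integral of `Xi5Term` replaced by `J (2s + 2j)`
for an arbitrary function `J`. -/
noncomputable def coneTerm (ω : ℝ) (J : ℂ → ℂ) (k j : ℕ) (s : ℂ) : ℂ :=
  sineFactor s * pochCoeff s j * ((k * ω : ℝ) : ℂ) ^ (1 - (2 * s + 2 * j)) * J (2 * s + 2 * j)

/-- The sum of `coneTerm ω J k j s` over `k ≥ 1`, without the factor `sineFactor s`. -/
noncomputable def coneRow (ω : ℝ) (J : ℂ → ℂ) (j : ℕ) (s : ℂ) : ℂ :=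
  pochCoeff s j * (ω : ℂ) ^ (1 - (2 * s + 2 * j)) * riemannZeta (2 * s + 2 * j - 1) *
    J (2 * s + 2 * j)

/-- `coneRow ω J 1` with its removable singularity at `s = 0` removed: the zero of `s / 4` cancels
the pole of `ζ (2s + 1)`. -/
noncomputable def coneRowOne (ω : ℝ) (J : ℂ → ℂ) (s : ℂ) : ℂ :=
  1 / 8 * (ω : ℂ) ^ (1 - (2 * s + 2)) * riemannZeta₁ (2 * s + 1) * J (2 * s + 2)

/-- The part of the series with `j ≥ 2`, without the factor `sineFactor s`. -/
noncomputable def coneTail (ω : ℝ) (J : ℂ → ℂ) (s : ℂ) : ℂ := ∑' j, coneRow ω J (j + 2) s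

/-- The continuation of `∑ j, coneRow ω J j s` to `Re s > -1/2`. -/
noncomputable def coneRowSum (ω : ℝ) (J : ℂ → ℂ) (s : ℂ) : ℂ :=
  coneRow ω J 0 s + coneRowOne ω J s + coneTail ω J s

/-- The continuation of the double series `∑ k ≥ 1, ∑ j, coneTerm ω J k j s` to `Re s > -1/2`. -/
noncomputable def coneSeries (ω : ℝ) (J : ℂ → ℂ) (s : ℂ) : ℂ := sineFactor s * coneRowSum ω J s

variable {ω B : ℝ} {J : ℂ → ℂ}

lemma re_two_mul_add_two_mul_natCast (s : ℂ) (j : ℕ) :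
    (2 * s + 2 * j).re = 2 * s.re + 2 * j := by simp

lemma norm_cpow_nat_succ_mul_le (hω : 1 ≤ ω) {r : ℝ} (hr : 0 ≤ r) (k : ℕ) {z : ℂ}
    (hz : z.re ≤ -r) :
    ‖(((k + 1 : ℕ) * ω : ℝ) : ℂ) ^ z‖ ≤ 1 / ((k + 1 : ℕ) : ℝ) ^ r := by
  have hk : (1 : ℝ) ≤ (k + 1 : ℕ) := by exact_mod_cast k.succ_pos
  have hkω : ((k + 1 : ℕ) : ℝ) ≤ (k + 1 : ℕ) * ω := le_mul_of_one_le_right (by positivity) hω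
  rw [Complex.norm_cpow_eq_rpow_re_of_pos (by linarith), one_div, ← Real.rpow_neg (by positivity)]
  calc ((k + 1 : ℕ) * ω) ^ z.re ≤ ((k + 1 : ℕ) * ω) ^ (-r) :=
        Real.rpow_le_rpow_of_exponent_le (hk.trans hkω) hz
    _ ≤ ((k + 1 : ℕ) : ℝ) ^ (-r) :=
        Real.rpow_le_rpow_of_nonpos (by positivity) hkω (neg_nonpos.2 hr)

lemma norm_coneTerm_succ_le (hω : 1 ≤ ω) (hB : ∀ w : ℂ, 2 ≤ w.re → ‖J w‖ ≤ B) {M : ℕ} {σ : ℝ}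
    (hσ : 1 ≤ σ) {s : ℂ} (hs : ‖s‖ ≤ M) (hre : σ ≤ s.re) (k j : ℕ) :
    ‖coneTerm ω J (k + 1) j s‖ ≤
      ‖sineFactor s‖ * B * (1 / ((k + 1 : ℕ) : ℝ) ^ (2 * σ - 1) * pochMajorant M j) := by
  have hre' := re_two_mul_add_two_mul_natCast s j
  have hJ : ‖J (2 * s + 2 * j)‖ ≤ B := hB _ (by linarith)
  have hpow := norm_cpow_nat_succ_mul_le hω (r := 2 * σ - 1) (by linarith) k
    (z := 1 - (2 * s + 2 * j)) (by rw [Complex.sub_re, Complex.one_re, hre']; linarith)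
  have hcoeff := norm_pochCoeff_le hs j
  have hmajorant := pochMajorant_nonneg M j
  calc ‖coneTerm ω J (k + 1) j s‖
      ≤ ‖sineFactor s‖ * pochMajorant M j * (1 / ((k + 1 : ℕ) : ℝ) ^ (2 * σ - 1)) * B := by
        rw [coneTerm, norm_mul, norm_mul, norm_mul]
        gcongr
    _ = ‖sineFactor s‖ * B * (1 / ((k + 1 : ℕ) : ℝ) ^ (2 * σ - 1) * pochMajorant M j) := by ring

lemma exists_nat_norm_le_of_isCompact {K : Set ℂ} (hK : IsCompact K) :
    ∃ M : ℕ, ∀ s ∈ K, ‖s‖ ≤ M := by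
  obtain ⟨C, hC⟩ := hK.isBounded.exists_norm_le
  obtain ⟨M, hM⟩ := exists_nat_ge C
  exact ⟨M, fun s hs => (hC s hs).trans hM⟩

lemma summableLocallyUniformlyOn_coneTerm (hω : 1 ≤ ω) (hB : ∀ w : ℂ, 2 ≤ w.re → ‖J w‖ ≤ B) :
    SummableLocallyUniformlyOn (fun p : ℕ × ℕ => coneTerm ω J (p.1 + 1) p.2)
      {s : ℂ | 1 < s.re} := by
  refine SummableLocallyUniformlyOn_of_locally_bounded (Complex.isOpen_re_gt 1) fun K hKsub hK => ?_
  obtain ⟨M, hM⟩ := exists_nat_norm_le_of_isCompact hK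
  obtain ⟨σ, hσ, hKσ⟩ := hK.exists_forall_le' Complex.continuous_re.continuousOn hKsub
  obtain ⟨A, hA⟩ := hK.exists_bound_of_continuousOn
    differentiable_sineFactor.continuous.continuousOn
  have hB0 : 0 ≤ B := (norm_nonneg _).trans (hB 2 (by norm_num))
  refine ⟨fun p => A * B * (1 / ((p.1 + 1 : ℕ) : ℝ) ^ (2 * σ - 1) * pochMajorant M p.2), ?_,
    fun p s hs => ?_⟩
  · exact ((summable_one_div_nat_succ_rpow (by linarith)).mul_of_nonneg (summable_pochMajorant M)
      (fun k => by simp only [Pi.zero_apply]; positivity) (pochMajorant_nonneg M)).mul_left (A * B)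
  · have hmajorant := pochMajorant_nonneg M p.2
    refine (norm_coneTerm_succ_le hω hB hσ.le (hM s hs) (hKσ s hs) p.1 p.2).trans ?_
    have hfactor : ‖sineFactor s‖ * B ≤ A * B := mul_le_mul_of_nonneg_right (hA s hs) hB0
    exact mul_le_mul_of_nonneg_right hfactor (by positivity)

lemma tsum_coneTerm_succ (hω : 0 ≤ ω) {s : ℂ} (hs : 1 < s.re) (j : ℕ) :
    ∑' k : ℕ, coneTerm ω J (k + 1) j s = sineFactor s * coneRow ω J j s := by
  have hre : 1 < (2 * s + 2 * j - 1 : ℂ).re := by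
    rw [Complex.sub_re, Complex.one_re, re_two_mul_add_two_mul_natCast]
    linarith
  have hterm : ∀ k : ℕ, coneTerm ω J (k + 1) j s =
      sineFactor s * pochCoeff s j * (ω : ℂ) ^ (1 - (2 * s + 2 * j)) * J (2 * s + 2 * j) *
        (1 / ((k : ℂ) + 1) ^ (2 * s + 2 * j - 1)) := fun k => by
    rw [coneTerm, Complex.ofReal_mul, Complex.mul_cpow_ofReal_nonneg (by positivity) hω,
      ← neg_sub (2 * s + 2 * (j : ℂ)) 1, Complex.cpow_neg (((k + 1 : ℕ) : ℝ) : ℂ)]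
    push_cast
    ring
  simp_rw [hterm]
  rw [tsum_mul_left, ← zeta_eq_tsum_one_div_nat_add_one_cpow hre, coneRow]
  ring

lemma coneRow_one_eq_coneRowOne {s : ℂ} (hs : s ≠ 0) : coneRow ω J 1 s = coneRowOne ω J s := by
  have hζ : riemannZeta (2 * s + 1) = (2 * s)⁻¹ * riemannZeta₁ (2 * s + 1) := by
    rw [riemannZeta_eq_inv_sub_mul (by simpa using hs), add_sub_cancel_right]
  have harg : 2 * s + 2 - 1 = 2 * s + 1 := by ring
  rw [coneRow, coneRowOne, pochCoeff_one_right, Nat.cast_one, mul_one, harg, hζ]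
  field_simp
  ring

lemma norm_coneRow_le (hω : 1 ≤ ω) (hB : ∀ w : ℂ, 2 ≤ w.re → ‖J w‖ ≤ B) {M : ℕ} {s : ℂ}
    (hs : ‖s‖ ≤ M) {j : ℕ} (hre : 3 ≤ (2 * s + 2 * j).re) :
    ‖coneRow ω J j s‖ ≤
      pochMajorant M j * ((∑' n : ℕ, 1 / ((n + 1 : ℕ) : ℝ) ^ (2 : ℝ)) * B) := by
  have hJ : ‖J (2 * s + 2 * j)‖ ≤ B := hB _ (by linarith)
  have hζ := norm_riemannZeta_le one_lt_two (z := 2 * s + 2 * j - 1)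
    (by rw [Complex.sub_re, Complex.one_re]; linarith)
  have hpow : ‖(ω : ℂ) ^ (1 - (2 * s + 2 * j))‖ ≤ 1 := by
    rw [Complex.norm_cpow_eq_rpow_re_of_pos (by linarith)]
    exact Real.rpow_le_one_of_one_le_of_nonpos hω
      (by rw [Complex.sub_re, Complex.one_re]; linarith)
  have hcoeff := norm_pochCoeff_le hs j
  have hmajorant := pochMajorant_nonneg M j
  calc ‖coneRow ω J j s‖
      ≤ pochMajorant M j * 1 * (∑' n : ℕ, 1 / ((n + 1 : ℕ) : ℝ) ^ (2 : ℝ)) * B := by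
        rw [coneRow, norm_mul, norm_mul, norm_mul]
        gcongr
    _ = pochMajorant M j * ((∑' n : ℕ, 1 / ((n + 1 : ℕ) : ℝ) ^ (2 : ℝ)) * B) := by ring

lemma three_lt_re_two_mul_add {s : ℂ} (hs : -(1 / 2) < s.re) (j : ℕ) :
    3 < (2 * s + 2 * (j + 2 : ℕ)).re := by
  rw [re_two_mul_add_two_mul_natCast, Nat.cast_add, Nat.cast_two]
  linarith

lemma summableLocallyUniformlyOn_coneRow (hω : 1 ≤ ω) (hB : ∀ w : ℂ, 2 ≤ w.re → ‖J w‖ ≤ B) :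
    SummableLocallyUniformlyOn (fun j => coneRow ω J (j + 2)) {s : ℂ | -(1 / 2) < s.re} := by
  refine SummableLocallyUniformlyOn_of_locally_bounded (Complex.isOpen_re_gt _) fun K hKsub hK => ?_
  obtain ⟨M, hM⟩ := exists_nat_norm_le_of_isCompact hK
  exact ⟨_, ((summable_nat_add_iff 2).2 (summable_pochMajorant M)).mul_right _,
    fun j s hs => norm_coneRow_le hω hB (hM s hs) (three_lt_re_two_mul_add (hKsub hs) j).le⟩

lemma tsum_coneTerm_eq_coneSeries (hω : 1 ≤ ω) (hB : ∀ w : ℂ, 2 ≤ w.re → ‖J w‖ ≤ B) {s : ℂ}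
    (hs : 1 < s.re) : ∑' p : ℕ × ℕ, coneTerm ω J (p.1 + 1) p.2 s = coneSeries ω J s := by
  have hs0 : s ≠ 0 := by
    rintro rfl
    norm_num at hs
  have hterms : Summable fun p : ℕ × ℕ => coneTerm ω J (p.1 + 1) p.2 s :=
    (summableLocallyUniformlyOn_coneTerm hω hB).summable hs
  have htail : Summable fun j => coneRow ω J (j + 2) s :=
    (summableLocallyUniformlyOn_coneRow hω hB).summable
      (show -(1 / 2) < s.re by linarith)
  have hrows : Summable fun j => coneRow ω J j s := (summable_nat_add_iff 2).1 htail
  calc ∑' p : ℕ × ℕ, coneTerm ω J (p.1 + 1) p.2 s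
      = ∑' (j : ℕ) (k : ℕ), coneTerm ω J (k + 1) j s := by
        rw [hterms.tsum_prod,
          ← Summable.tsum_comm (f := fun k j => coneTerm ω J (k + 1) j s) hterms]
    _ = sineFactor s * ∑' j, coneRow ω J j s := by
        simp_rw [tsum_coneTerm_succ (zero_le_one.trans hω) hs, tsum_mul_left]
    _ = coneSeries ω J s := by
        rw [← hrows.sum_add_tsum_nat_add 2, Finset.sum_range_succ, Finset.sum_range_one,
          coneRow_one_eq_coneRowOne hs0, coneSeries, coneRowSum, coneTail]

lemma analyticAt_ofReal_cpow (hω : 0 < ω) {g : ℂ → ℂ} {s : ℂ} (hg : AnalyticAt ℂ g s) :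
    AnalyticAt ℂ (fun z => (ω : ℂ) ^ g z) s :=
  analyticAt_const.cpow hg (Complex.ofReal_mem_slitPlane.2 hω)

lemma analyticAt_coneRow (hω : 0 < ω) {j : ℕ} {s : ℂ} (hs : 2 * s + 2 * j - 1 ≠ 1)
    (hJ : AnalyticAt ℂ J (2 * s + 2 * j)) : AnalyticAt ℂ (coneRow ω J j) s := by
  have hζ : AnalyticAt ℂ (fun z => riemannZeta (2 * z + 2 * j - 1)) s :=
    AnalyticAt.fun_comp (f := fun z : ℂ => 2 * z + 2 * j - 1) (analyticOn_riemannZeta _ hs)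
      (by fun_prop)
  have hJcomp : AnalyticAt ℂ (fun z => J (2 * z + 2 * j)) s :=
    AnalyticAt.fun_comp (f := fun z : ℂ => 2 * z + 2 * j) hJ (by fun_prop)
  exact (((analyticAt_pochCoeff j s).mul (analyticAt_ofReal_cpow hω (by fun_prop))).mul hζ).mul
    hJcomp

lemma meromorphicAt_coneRow (hω : 0 < ω) {j : ℕ} {s : ℂ} (hJ : MeromorphicAt J (2 * s + 2 * j)) :
    MeromorphicAt (coneRow ω J j) s := by
  have hζ : MeromorphicAt (fun z => riemannZeta (2 * z + 2 * j - 1)) s :=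
    (meromorphicAt_riemannZeta _).comp_analyticAt (g := fun z : ℂ => 2 * z + 2 * j - 1)
      (by fun_prop)
  have hJcomp : MeromorphicAt (fun z => J (2 * z + 2 * j)) s :=
    MeromorphicAt.comp_analyticAt (g := fun z : ℂ => 2 * z + 2 * j) hJ (by fun_prop)
  exact (((analyticAt_pochCoeff j s).mul
    (analyticAt_ofReal_cpow hω (by fun_prop))).meromorphicAt.mul hζ).mul hJcomp

lemma analyticAt_coneRowOne (hω : 0 < ω) {s : ℂ} (hJ : AnalyticAt ℂ J (2 * s + 2)) :
    AnalyticAt ℂ (coneRowOne ω J) s := by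
  have hζ : AnalyticAt ℂ (fun z => riemannZeta₁ (2 * z + 1)) s :=
    AnalyticAt.fun_comp (f := fun z => 2 * z + 1) (differentiable_riemannZeta₁.analyticAt _)
      (by fun_prop)
  have hJcomp : AnalyticAt ℂ (fun z => J (2 * z + 2)) s :=
    AnalyticAt.fun_comp (f := fun z => 2 * z + 2) hJ (by fun_prop)
  exact ((analyticAt_const.mul (analyticAt_ofReal_cpow hω (by fun_prop))).mul hζ).mul hJcomp

lemma analyticAt_coneTail (hω : 1 ≤ ω) (hB : ∀ w : ℂ, 2 ≤ w.re → ‖J w‖ ≤ B)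
    (hJ : ∀ w : ℂ, 1 < w.re → AnalyticAt ℂ J w) {s : ℂ} (hs : -(1 / 2) < s.re) :
    AnalyticAt ℂ (coneTail ω J) s := by
  have hrow : ∀ (j : ℕ) (z : ℂ), -(1 / 2) < z.re → AnalyticAt ℂ (coneRow ω J (j + 2)) z := by
    intro j z hz
    have hre := three_lt_re_two_mul_add hz j
    refine analyticAt_coneRow (one_pos.trans_le hω) (fun h => ?_) (hJ _ (by linarith))
    have hre_eq := congrArg Complex.re h
    rw [Complex.sub_re, Complex.one_re] at hre_eq
    linarith
  exact ((summableLocallyUniformlyOn_coneRow hω hB).differentiableOn (Complex.isOpen_re_gt _)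
    fun j z hz => (hrow j z hz).differentiableAt).analyticAt ((Complex.isOpen_re_gt _).mem_nhds hs)

lemma meromorphicOn_coneSeries (hω : 1 ≤ ω) (hB : ∀ w : ℂ, 2 ≤ w.re → ‖J w‖ ≤ B)
    (hJmero : ∀ w : ℂ, -1 < w.re → MeromorphicAt J w)
    (hJ : ∀ w : ℂ, 1 < w.re → AnalyticAt ℂ J w) :
    MeromorphicOn (coneSeries ω J) {s : ℂ | -(1 / 2) < s.re} := by
  intro s hs
  have hs' : -(1 / 2) < s.re := hs
  have hω0 : 0 < ω := one_pos.trans_le hω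
  have hre : (2 * s + 2).re = 2 * s.re + 2 := by simp
  have hzero : MeromorphicAt (coneRow ω J 0) s := by
    refine meromorphicAt_coneRow hω0 (hJmero _ ?_)
    rw [re_two_mul_add_two_mul_natCast, Nat.cast_zero]
    linarith
  have hone : AnalyticAt ℂ (coneRowOne ω J) s := analyticAt_coneRowOne hω0 (hJ _ (by linarith))
  exact (differentiable_sineFactor.analyticAt s).meromorphicAt.mul
    ((hzero.add hone.meromorphicAt).add (analyticAt_coneTail hω hB hJ hs).meromorphicAt)

lemma analyticAt_coneRowSum_zero (hω : 1 ≤ ω) (hB : ∀ w : ℂ, 2 ≤ w.re → ‖J w‖ ≤ B)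
    (hJ0 : AnalyticAt ℂ J 0) (hJ : ∀ w : ℂ, 1 < w.re → AnalyticAt ℂ J w) :
    AnalyticAt ℂ (coneRowSum ω J) 0 := by
  have hω0 : 0 < ω := one_pos.trans_le hω
  have hzero : AnalyticAt ℂ (coneRow ω J 0) 0 :=
    analyticAt_coneRow hω0 (by norm_num) (by simpa using hJ0)
  have hone : AnalyticAt ℂ (coneRowOne ω J) 0 := analyticAt_coneRowOne hω0 (hJ _ (by norm_num))
  exact (hzero.add hone).add (analyticAt_coneTail hω hB hJ (by norm_num))

lemma coneSeries_zero : coneSeries ω J 0 = 0 := by rw [coneSeries, sineFactor_zero, zero_mul]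

lemma coneTail_zero : coneTail ω J 0 = 0 := by
  have hrow : ∀ j, coneRow ω J (j + 2) 0 = 0 := fun j => by
    rw [coneRow, pochCoeff_zero_succ (j + 1), zero_mul, zero_mul, zero_mul]
  simp only [coneTail, hrow, tsum_zero]

lemma coneRowSum_zero : coneRowSum ω J 0 = -(ω : ℂ) / 12 * J 0 + J 2 / (8 * ω) := by
  rw [coneRowSum, coneTail_zero, coneRow, coneRowOne, pochCoeff_zero_right]
  norm_num [riemannZeta_neg_one, Complex.cpow_neg_one]
  ring

lemma deriv_coneSeries_zero (hω : 1 ≤ ω) (hB : ∀ w : ℂ, 2 ≤ w.re → ‖J w‖ ≤ B)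
    (hJ0 : AnalyticAt ℂ J 0) (hJ : ∀ w : ℂ, 1 < w.re → AnalyticAt ℂ J w) :
    deriv (coneSeries ω J) 0 = -(ω : ℂ) / 6 * J 0 + J 2 / (4 * ω) := by
  have hderiv := hasDerivAt_sineFactor_zero.mul
    (analyticAt_coneRowSum_zero hω hB hJ0 hJ).differentiableAt.hasDerivAt
  refine hderiv.deriv.trans ?_
  rw [sineFactor_zero, coneRowSum_zero]
  ring

lemma analyticAt_coneSeries_zero (hω : 1 ≤ ω) (hB : ∀ w : ℂ, 2 ≤ w.re → ‖J w‖ ≤ B)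
    (hJ0 : AnalyticAt ℂ J 0) (hJ : ∀ w : ℂ, 1 < w.re → AnalyticAt ℂ J w) :
    AnalyticAt ℂ (coneSeries ω J) 0 :=
  (differentiable_sineFactor.analyticAt 0).mul (analyticAt_coneRowSum_zero hω hB hJ0 hJ)

end ConeSeries

section Xi5

open Topology

lemma Xi5Term_eq_coneTerm (ω : ℕ) (η : ℝ) (k j : ℕ) {s : ℂ} (hs : 1 < s.re) :
    Xi5Term ω η k j s = coneTerm ω (logMoment η) k j s := by
  have hw : 1 < (2 * s + 2 * j : ℂ).re := by
    rw [re_two_mul_add_two_mul_natCast]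
    linarith
  rw [coneTerm, logMoment_eq_tailMellin η hw, ← sub_sub, tailMellin, neg_add']
  rfl

lemma summableLocallyUniformlyOn_Xi5Term {ω : ℕ} (hω : 1 ≤ ω) (η : ℝ) :
    SummableLocallyUniformlyOn (fun p : ℕ × ℕ => Xi5Term ω η (p.1 + 1) p.2) {s : ℂ | 1 < s.re} :=
  SummableLocallyUniformlyOn_congr (fun p _ hs => (Xi5Term_eq_coneTerm ω η (p.1 + 1) p.2 hs).symm)
    (summableLocallyUniformlyOn_coneTerm (Nat.one_le_cast.2 hω) fun _ => norm_logMoment_le η)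

lemma tsum_Xi5Term_eq_coneSeries {ω : ℕ} (hω : 1 ≤ ω) (η : ℝ) {s : ℂ} (hs : 1 < s.re) :
    ∑' p : ℕ × ℕ, Xi5Term ω η (p.1 + 1) p.2 s = coneSeries ω (logMoment η) s := by
  simp only [Xi5Term_eq_coneTerm ω η _ _ hs]
  exact tsum_coneTerm_eq_coneSeries (Nat.one_le_cast.2 hω) (fun _ => norm_logMoment_le η) hs

lemma tendsto_deriv_coneSeries_logMoment {ω : ℝ} (hω : 1 ≤ ω) :
    Tendsto (fun η : ℝ => deriv (coneSeries ω (logMoment η)) 0 -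
        ((riemannZeta 0 + Real.log 2) / (2 * ω) + ω / 6 * Real.log 2 + ω / 6 * Real.log η))
      (𝓝[>] 0) (𝓝 0) := by
  have hω0 : (ω : ℂ) ≠ 0 := Complex.ofReal_ne_zero.2 (one_pos.trans_le hω).ne'
  have hlim := (tendsto_logMoment_zero_add_log.const_mul (-(ω : ℂ) / 6)).add
    ((tendsto_logMoment_two.sub_const ((2 * Real.log 2 - 1 : ℝ) : ℂ)).div_const (4 * (ω : ℂ)))
  rw [mul_zero, sub_self, zero_div, add_zero] at hlim
  refine hlim.congr' ?_
  filter_upwards [self_mem_nhdsWithin] with η hη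
  rw [deriv_coneSeries_zero hω (fun _ => norm_logMoment_le η) (analyticAt_logMoment_zero hη)
    fun _ => analyticAt_logMoment_of_one_lt_re hη, riemannZeta_zero]
  push_cast
  field_simp
  ring

end Xi5

/-- for a fixed integer `ω ≥ 1`, for every `η > 0` the double series
`Ξ₅(s)` converges absolutely and locally uniformly on the strip `1 < Re(s) < 2`, and its sum
extends to a meromorphic function on the half-plane `Re(s) > -1/2` which is holomorphic at
`s = 0` with value `Ξ₅(0) = 0`; moreover its derivative at `0` satisfies
`Ξ₅'(0) = (ζ(0) + log 2)/(2ω) + (ω/6)·log 2 + (ω/6)·log η + o(1)` as `η → 0⁺`. -/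
theorem statement10 (ω : ℕ) (hω : 1 ≤ ω) :
    ∃ F : ℝ → ℂ → ℂ,
      (∀ η : ℝ, 0 < η →
        (∀ s ∈ {s : ℂ | 1 < s.re ∧ s.re < 2},
          Summable (fun p : ℕ × ℕ => ‖Xi5Term ω η (p.1 + 1) p.2 s‖)) ∧
        TendstoLocallyUniformlyOn
          (fun (N : Finset (ℕ × ℕ)) (s : ℂ) => ∑ p ∈ N, Xi5Term ω η (p.1 + 1) p.2 s)
          (fun s : ℂ => ∑' p : ℕ × ℕ, Xi5Term ω η (p.1 + 1) p.2 s)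
          atTop {s : ℂ | 1 < s.re ∧ s.re < 2} ∧
        MeromorphicOn (F η) {s : ℂ | -(1 / 2) < s.re} ∧
        Set.EqOn (F η) (fun s : ℂ => ∑' p : ℕ × ℕ, Xi5Term ω η (p.1 + 1) p.2 s)
          {s : ℂ | 1 < s.re ∧ s.re < 2} ∧
        AnalyticAt ℂ (F η) 0 ∧
        F η 0 = 0) ∧
      Tendsto
        (fun η : ℝ => deriv (F η) 0 -
          ((riemannZeta 0 + (Real.log 2 : ℂ)) / (2 * (ω : ℂ)) +
            ((ω : ℂ) / 6) * (Real.log 2 : ℂ) + ((ω : ℂ) / 6) * (Real.log η : ℂ)))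
        (nhdsWithin 0 (Set.Ioi 0)) (nhds 0) := by
  have hω' : (1 : ℝ) ≤ ω := Nat.one_le_cast.2 hω
  refine ⟨fun η => coneSeries ω (logMoment η), fun η hη => ?_,
    by simpa only [Complex.ofReal_natCast] using tendsto_deriv_coneSeries_logMoment hω'⟩
  have hB : ∀ w : ℂ, 2 ≤ w.re → ‖logMoment η w‖ ≤ Real.log 2 := fun _ => norm_logMoment_le η
  have hmero : ∀ w : ℂ, -1 < w.re → MeromorphicAt (logMoment η) w :=
    fun _ => meromorphicAt_logMoment hη
  have hanalytic : ∀ w : ℂ, 1 < w.re → AnalyticAt ℂ (logMoment η) w :=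
    fun _ => analyticAt_logMoment_of_one_lt_re hη
  have hsum := summableLocallyUniformlyOn_Xi5Term hω η
  refine ⟨fun s hs => (hsum.summable hs.1).norm, ?_,
    meromorphicOn_coneSeries hω' hB hmero hanalytic,
    fun s hs => (tsum_Xi5Term_eq_coneSeries hω η hs.1).symm,
    analyticAt_coneSeries_zero hω' hB (analyticAt_logMoment_zero hη) hanalytic, coneSeries_zero⟩
  exact (hasSumLocallyUniformlyOn_iff_tendstoLocallyUniformlyOn.1
    hsum.hasSumLocallyUniformlyOn).mono fun s hs => hs.1
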